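/- Let G be a finite, connected, simple graph with maximum degree at most 3, nonnegative Ricci curvature, and diameter at least 6, and let P = v_0 v_1 ⋯ v_l be a diameter path with l ≥ 6. Suppose the set K = { i : 1 ≤ i ≤ l − 1 and v_i has a neighbor u ∉ {v_{i−1}, v_{i+1}} with d(v_0, u) = i } is nonempty. Then min K ∈ {1, 2, 3, l−2, l−1}, i.e. min K ≤ 3 or min K ≥ l − 2. -/

import Mathlib

open SimpleGraph

variable {V : Type*}

/-- Combinatorial (unnormalized) graph Laplacian. -/
def lapl (G : SimpleGraph V) [G.LocallyFinite] (f : V → ℝ) (x : V) : ℝ :=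
  ∑ y ∈ G.neighborFinset x, (f y - f x)

/-- Lin-Lu-Yau-Ollivier Ricci curvature (limit-free definition):
`κ(u,v) = inf { Δf(u) − Δf(v) : f 1-Lipschitz w.r.t. graph distance, f v − f u = 1 }`. -/
noncomputable def ricci (G : SimpleGraph V) [G.LocallyFinite] (u v : V) : ℝ :=
  sInf { r : ℝ | ∃ f : V → ℝ,
    (∀ x y : V, |f x - f y| ≤ (G.dist x y : ℝ)) ∧ f v - f u = 1 ∧
    r = lapl G f u - lapl G f v }

/-- Nonnegative Ricci curvature on every edge. -/
def NonnegRicci (G : SimpleGraph V) [G.LocallyFinite] : Prop :=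
  ∀ u v : V, G.Adj u v → 0 ≤ ricci G u v

/-!
Let `a, b` be two neighbors of `u` other than `v`, and let `c` be a neighbor of `v` at distance at
least `3` from both. Testing the curvature of the edge `uv` against the distance to `{a, b}` gives
a shortcut: a neighbor `t ≠ u` of `v` adjacent to `a` or `b`. Grade the vertices by their distance
from `v 0`. Subcubicity leaves so little room for shortcuts that horizontal edges propagate
backwards along the path: if `4 ≤ i ≤ l - 3` and `v i` has a neighbor on its own level, then so
does `v (i - 1)`. Hence no such `i` is the smallest element of `K`.
-/

lemma abs_lapl_le_degree (G : SimpleGraph V) [G.LocallyFinite] {f : V → ℝ}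
    (hf : ∀ x y, |f x - f y| ≤ (G.dist x y : ℝ)) (x : V) : |lapl G f x| ≤ G.degree x :=
  calc |lapl G f x| ≤ ∑ y ∈ G.neighborFinset x, |f y - f x| := Finset.abs_sum_le_sum_abs _ _
    _ ≤ ∑ _y ∈ G.neighborFinset x, (1 : ℝ) := by
        refine Finset.sum_le_sum fun y hy => (hf y x).trans_eq ?_
        rw [dist_eq_one_iff_adj.2 ((G.mem_neighborFinset x y).1 hy).symm, Nat.cast_one]
    _ = G.degree x := by simp

lemma NonnegRicci.lapl_le_lapl {G : SimpleGraph V} [G.LocallyFinite] (hric : NonnegRicci G)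
    {u v : V} (huv : G.Adj u v) {f : V → ℝ} (hf : ∀ x y, |f x - f y| ≤ (G.dist x y : ℝ))
    (hfuv : f v - f u = 1) : lapl G f v ≤ lapl G f u := by
  have hbdd : BddBelow { r : ℝ | ∃ g : V → ℝ, (∀ x y : V, |g x - g y| ≤ (G.dist x y : ℝ)) ∧
      g v - g u = 1 ∧ r = lapl G g u - lapl G g v } := by
    refine ⟨-(G.degree u + G.degree v : ℝ), ?_⟩
    rintro _ ⟨g, hg, -, rfl⟩
    have hu := abs_le.1 (abs_lapl_le_degree G hg u)
    have hv := abs_le.1 (abs_lapl_le_degree G hg v)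
    linarith
  have hle : ricci G u v ≤ lapl G f u - lapl G f v := csInf_le hbdd ⟨f, hf, hfuv, rfl⟩
  linarith [hric u v huv]

lemma abs_natCast_sub_le_dist {G : SimpleGraph V} {f : V → ℕ}
    (hf : ∀ x y, f x ≤ f y + G.dist x y) (x y : V) : |(f x : ℝ) - f y| ≤ G.dist x y := by
  have hxy : (f x : ℝ) ≤ f y + G.dist x y := mod_cast hf x y
  have hyx : (f y : ℝ) ≤ f x + G.dist x y := mod_cast G.dist_comm (u := x) ▸ hf y x
  exact abs_sub_le_iff.2 ⟨by linarith, by linarith⟩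

lemma neighborFinset_eq_of_degree_le_three [DecidableEq V] {G : SimpleGraph V}
    [G.LocallyFinite] {x a b c : V} (hdeg : G.degree x ≤ 3) (ha : G.Adj x a) (hb : G.Adj x b)
    (hc : G.Adj x c) (hab : a ≠ b) (hac : a ≠ c) (hbc : b ≠ c) :
    G.neighborFinset x = {a, b, c} := by
  refine (Finset.eq_of_subset_of_card_le ?_ ?_).symm
  · simp [Finset.insert_subset_iff, ha, hb, hc]
  · rwa [G.card_neighborFinset_eq_degree, Finset.card_eq_three.2 ⟨a, b, c, hab, hac, hbc, rfl⟩]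

lemma eq_or_eq_or_eq_of_degree_le_three {G : SimpleGraph V} [G.LocallyFinite] {x a b c t : V}
    (hdeg : G.degree x ≤ 3) (ha : G.Adj x a) (hb : G.Adj x b) (hc : G.Adj x c)
    (hab : a ≠ b) (hac : a ≠ c) (hbc : b ≠ c) (ht : G.Adj x t) : t = a ∨ t = b ∨ t = c := by
  classical
  simpa [neighborFinset_eq_of_degree_le_three hdeg ha hb hc hab hac hbc] using
    (G.mem_neighborFinset x t).2 ht

lemma lapl_eq_of_degree_le_three {G : SimpleGraph V} [G.LocallyFinite] {x a b c : V}
    (hdeg : G.degree x ≤ 3) (ha : G.Adj x a) (hb : G.Adj x b) (hc : G.Adj x c)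
    (hab : a ≠ b) (hac : a ≠ c) (hbc : b ≠ c) (f : V → ℝ) :
    lapl G f x = f a + f b + f c - 3 * f x := by
  classical
  rw [lapl, neighborFinset_eq_of_degree_le_three hdeg ha hb hc hab hac hbc,
    Finset.sum_insert (by simp [hab, hac]), Finset.sum_pair hbc]
  ring

lemma lapl_nonneg_of_le_add {G : SimpleGraph V} [G.LocallyFinite] {f : V → ℝ} {x a c : V}
    (ha : G.Adj x a) (hc : G.Adj x c) (hac : a ≠ c) (hf : 2 * f x ≤ f a + f c)
    (ht : ∀ t, G.Adj x t → t ≠ a → t ≠ c → f x ≤ f t) : 0 ≤ lapl G f x := by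
  classical
  have hsub : ({a, c} : Finset V) ⊆ G.neighborFinset x := by
    simp [Finset.insert_subset_iff, ha, hc]
  rw [lapl, ← Finset.sum_sdiff hsub, Finset.sum_pair hac]
  refine add_nonneg (Finset.sum_nonneg fun t htm => ?_) (by linarith)
  simp only [Finset.mem_sdiff, mem_neighborFinset, Finset.mem_insert, Finset.mem_singleton,
    not_or] at htm
  exact sub_nonneg.2 (ht t htm.1 htm.2.1 htm.2.2)

/-- The distance from `z` to the set `{a, b}`, used as the test function for the curvature of an
edge at a common neighbor of `a` and `b`. -/
noncomputable def distToPair (G : SimpleGraph V) (a b z : V) : ℕ :=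
  min (G.dist a z) (G.dist b z)

lemma distToPair_le_add_dist {G : SimpleGraph V} (hconn : G.Connected) (a b x y : V) :
    distToPair G a b x ≤ distToPair G a b y + G.dist x y := by
  have ha := hconn.dist_triangle (u := a) (v := y) (w := x)
  have hb := hconn.dist_triangle (u := b) (v := y) (w := x)
  rw [G.dist_comm (u := y)] at ha hb
  simp only [distToPair]
  omega

lemma two_le_distToPair {G : SimpleGraph V} (hconn : G.Connected) {a b t : V} (hta : t ≠ a)
    (htb : t ≠ b) (hat : ¬ G.Adj a t) (hbt : ¬ G.Adj b t) : 2 ≤ distToPair G a b t :=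
  le_min (hconn.one_lt_dist_of_ne_of_not_adj hta.symm hat)
    (hconn.one_lt_dist_of_ne_of_not_adj htb.symm hbt)

lemma NonnegRicci.exists_adj_and_adj_or_adj {G : SimpleGraph V} [G.LocallyFinite]
    (hconn : G.Connected) (hric : NonnegRicci G) {u v a b c : V} (hdeg : G.degree u ≤ 3)
    (huv : G.Adj u v) (hvc : G.Adj v c) (hua : G.Adj u a) (hub : G.Adj u b) (hab : a ≠ b)
    (hac : 3 ≤ G.dist a c) (hbc : 3 ≤ G.dist b c) :
    ∃ t, t ≠ u ∧ G.Adj v t ∧ (G.Adj a t ∨ G.Adj b t) := by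
  by_contra! h
  have duv : G.dist u v = 1 := dist_eq_one_iff_adj.2 huv
  have dvc : G.dist v c = 1 := dist_eq_one_iff_adj.2 hvc
  have dau : G.dist a u = 1 := dist_eq_one_iff_adj.2 hua.symm
  have dbu : G.dist b u = 1 := dist_eq_one_iff_adj.2 hub.symm
  have hauv := hconn.dist_triangle (u := a) (v := u) (w := v)
  have hbuv := hconn.dist_triangle (u := b) (v := u) (w := v)
  have havc := hconn.dist_triangle (u := a) (v := v) (w := c)
  have hbvc := hconn.dist_triangle (u := b) (v := v) (w := c)
  let f := distToPair G a b
  have fa : f a = 0 := by simp [f, distToPair]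
  have fb : f b = 0 := by simp [f, distToPair]
  have fu : f u = 1 := by simp [f, distToPair, dau, dbu]
  have fv : f v = 2 := by simp only [f, distToPair]; omega
  have fc : 3 ≤ f c := by simp only [f, distToPair]; omega
  have ft : ∀ t, G.Adj v t → t ≠ u → t ≠ c → f v ≤ f t := by
    intro t hvt htu _
    obtain ⟨hat, hbt⟩ := h t htu hvt
    have dvt := dist_eq_one_iff_adj.2 hvt.symm
    exact fv ▸ two_le_distToPair hconn (by rintro rfl; omega) (by rintro rfl; omega) hat hbt
  have hv : 0 ≤ lapl G (fun x => (f x : ℝ)) v :=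
    lapl_nonneg_of_le_add huv.symm hvc (ne_of_apply_ne f (by omega))
      (mod_cast (by omega : 2 * f v ≤ f u + f c)) (mod_cast ft)
  have hu : lapl G (fun x => (f x : ℝ)) u = -1 := by
    rw [lapl_eq_of_degree_le_three hdeg huv hua hub (ne_of_apply_ne f (by omega))
      (ne_of_apply_ne f (by omega)) hab]
    norm_num [fa, fb, fu, fv]
  have hvu := hric.lapl_le_lapl huv
    (abs_natCast_sub_le_dist (distToPair_le_add_dist hconn a b)) (by norm_num [f, fu, fv])
  linarith

/-- `UpEdge G o x y`: the edge `xy` climbs one level of the distance function from `o`. -/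
abbrev UpEdge (G : SimpleGraph V) (o x y : V) : Prop :=
  G.Adj x y ∧ G.dist o y = G.dist o x + 1

/-- `HorizontalEdge G o x y`: the edge `xy` stays on a level of the distance function from `o`. -/
abbrev HorizontalEdge (G : SimpleGraph V) (o x y : V) : Prop :=
  G.Adj x y ∧ G.dist o y = G.dist o x

lemma exists_upEdge_of_dist_ne_zero {G : SimpleGraph V} {o x : V} (hx : G.dist o x ≠ 0) :
    ∃ y, UpEdge G o y x := by
  obtain ⟨p, hp⟩ := exists_walk_of_dist_ne_zero (G.dist_comm (u := o) ▸ hx)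
  match p, hp with
  | .nil, _ => simp at hx
  | .cons (v := y) hxy q, hp =>
    have hq : G.dist o y ≤ q.length := G.dist_comm (u := o) ▸ dist_le q
    have hy := hxy.diff_dist_adj (u := o)
    rw [Walk.length_cons, G.dist_comm] at hp
    exact ⟨y, hxy.symm, by omega⟩

lemma le_dist_of_dist_add_le {G : SimpleGraph V} (hconn : G.Connected) {o x y : V} {k : ℕ}
    (h : G.dist o x + k ≤ G.dist o y) : k ≤ G.dist x y := by
  have := hconn.dist_triangle (u := o) (v := x) (w := y)
  omega

lemma le_dist_of_dist_add_le' {G : SimpleGraph V} (hconn : G.Connected) {o x y : V} {k : ℕ}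
    (h : G.dist o y + k ≤ G.dist o x) : k ≤ G.dist x y :=
  G.dist_comm (u := x) ▸ le_dist_of_dist_add_le hconn h

lemma exists_upEdge_and_upEdge {G : SimpleGraph V} (hconn : G.Connected) {o x y : V}
    (hxy : G.dist o y = G.dist o x + 2) (h : G.dist x y < 3) :
    ∃ w, UpEdge G o x w ∧ UpEdge G o w y := by
  have hxy2 : G.dist x y = 2 := by
    have := le_dist_of_dist_add_le hconn hxy.ge
    omega
  obtain ⟨w, hwy, hw⟩ := exists_upEdge_of_dist_ne_zero (G := G) (o := x) (x := y) (by omega)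
  have hxw : G.Adj x w := dist_eq_one_iff_adj.1 (by omega)
  have := hxw.diff_dist_adj (u := o)
  have := hwy.diff_dist_adj (u := o)
  exact ⟨w, ⟨hxw, by omega⟩, hwy, by omega⟩

section Subcubic

variable {G : SimpleGraph V} [G.LocallyFinite] {o x a b s t : V}

lemma eq_of_upEdge_of_upEdge_of_dist_le (hdeg : G.degree x ≤ 3) (ha : UpEdge G o x a)
    (hb : UpEdge G o x b) (hab : a ≠ b) (hs : G.Adj x s) (hs_le : G.dist o s ≤ G.dist o x)
    (ht : G.Adj x t) (ht_le : G.dist o t ≤ G.dist o x) : s = t := by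
  by_contra hst
  rcases eq_or_eq_or_eq_of_degree_le_three hdeg ha.1 hb.1 hs hab
    (ne_of_apply_ne (G.dist o) (by omega)) (ne_of_apply_ne (G.dist o) (by omega)) ht with
    rfl | rfl | rfl <;> first | omega | exact hst rfl

lemma eq_of_upEdge_of_upEdge_of_le_dist (hdeg : G.degree x ≤ 3) (ha : UpEdge G o a x)
    (hb : UpEdge G o b x) (hab : a ≠ b) (hs : G.Adj x s) (hs_le : G.dist o x ≤ G.dist o s)
    (ht : G.Adj x t) (ht_le : G.dist o x ≤ G.dist o t) : s = t := by
  by_contra hst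
  rcases eq_or_eq_or_eq_of_degree_le_three hdeg ha.1.symm hb.1.symm hs hab
    (ne_of_apply_ne (G.dist o) (by omega)) (ne_of_apply_ne (G.dist o) (by omega)) ht with
    rfl | rfl | rfl <;> first | omega | exact hst rfl

lemma eq_or_eq_or_eq_of_adj_of_horizontalEdge (hdeg : G.degree x ≤ 3) (ha : UpEdge G o a x)
    (hb : UpEdge G o x b) (hs : HorizontalEdge G o x s) (ht : G.Adj x t) :
    t = a ∨ t = b ∨ t = s :=
  eq_or_eq_or_eq_of_degree_le_three hdeg ha.1.symm hb.1 hs.1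
    (ne_of_apply_ne (G.dist o) (by omega)) (ne_of_apply_ne (G.dist o) (by omega))
    (ne_of_apply_ne (G.dist o) (by omega)) ht

lemma eq_of_upEdge_of_horizontalEdge_of_upEdge_right (hdeg : G.degree x ≤ 3)
    (ha : UpEdge G o a x) (hb : UpEdge G o x b) (hs : HorizontalEdge G o x s)
    (ht : UpEdge G o x t) : t = b := by
  rcases eq_or_eq_or_eq_of_adj_of_horizontalEdge hdeg ha hb hs ht.1 with rfl | rfl | rfl <;>
    first | rfl | omega

lemma eq_of_upEdge_of_horizontalEdge_of_upEdge_left (hdeg : G.degree x ≤ 3)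
    (ha : UpEdge G o a x) (hb : UpEdge G o x b) (hs : HorizontalEdge G o x s)
    (ht : UpEdge G o t x) : t = a := by
  rcases eq_or_eq_or_eq_of_adj_of_horizontalEdge hdeg ha hb hs ht.1.symm with
    rfl | rfl | rfl <;> first | rfl | omega

end Subcubic

section Propagation

-- The `pᵢ` are consecutive vertices of a path climbing away from `o`, indexed so that `p₄` is the
-- one carrying the horizontal edge.

variable {G : SimpleGraph V} [G.LocallyFinite] {o p₀ p₁ p₂ p₃ p₄ p₅ p₆ p₇ : V}
variable (hconn : G.Connected) (hdeg : ∀ x, G.degree x ≤ 3) (hric : NonnegRicci G)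
include hconn hdeg hric

lemma exists_upEdge_diamond_below {a b : V} (h₀ : UpEdge G o p₀ p₁) (h₁ : UpEdge G o p₁ p₂)
    (ha : UpEdge G o p₂ a) (hb : UpEdge G o p₂ b) (hab : a ≠ b)
    (ha_low : ∀ x, UpEdge G o x a → x = p₂) :
    ∃ x, x ≠ p₂ ∧ UpEdge G o p₁ x ∧ UpEdge G o x b := by
  obtain ⟨t, htp, hpt, hat | hbt⟩ := hric.exists_adj_and_adj_or_adj hconn (hdeg p₂) h₁.1.symm
    h₀.1.symm ha.1 hb.1 hab (le_dist_of_dist_add_le' hconn (o := o) (by omega))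
    (le_dist_of_dist_add_le' hconn (o := o) (by omega))
  · have := hpt.diff_dist_adj (u := o)
    have := hat.diff_dist_adj (u := o)
    exact absurd (ha_low t ⟨hat.symm, by omega⟩) htp
  · have := hpt.diff_dist_adj (u := o)
    have := hbt.diff_dist_adj (u := o)
    exact ⟨t, htp, ⟨hpt, by omega⟩, hbt.symm, by omega⟩

lemma exists_upEdge_diamond_above {a b : V} (ha : UpEdge G o a p₅) (hb : UpEdge G o b p₅)
    (h₅ : UpEdge G o p₅ p₆) (h₆ : UpEdge G o p₆ p₇) (hab : a ≠ b)
    (ha_up : ∀ x, UpEdge G o a x → x = p₅) :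
    ∃ x, x ≠ p₅ ∧ UpEdge G o x p₆ ∧ UpEdge G o b x := by
  obtain ⟨t, htp, hpt, hat | hbt⟩ := hric.exists_adj_and_adj_or_adj hconn (hdeg p₅) h₅.1
    h₆.1 ha.1.symm hb.1.symm hab (le_dist_of_dist_add_le hconn (o := o) (by omega))
    (le_dist_of_dist_add_le hconn (o := o) (by omega))
  · have := hpt.diff_dist_adj (u := o)
    have := hat.diff_dist_adj (u := o)
    exact absurd (ha_up t ⟨hat, by omega⟩) htp
  · have := hpt.diff_dist_adj (u := o)
    have := hbt.diff_dist_adj (u := o)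
    exact ⟨t, htp, ⟨hpt.symm, by omega⟩, hbt, by omega⟩

lemma eq_of_upEdge_pred_of_horizontalEdge {u x : V} (h₂ : UpEdge G o p₂ p₃) (h₃ : UpEdge G o p₃ p₄)
    (h₄ : UpEdge G o p₄ p₅) (hu : HorizontalEdge G o p₄ u) (hx : UpEdge G o x p₃) : x = p₂ := by
  by_contra hxp
  obtain ⟨t, htp, hpt, ht⟩ := hric.exists_adj_and_adj_or_adj hconn (hdeg p₃) h₃.1 h₄.1
    h₂.1.symm hx.1.symm (Ne.symm hxp) (le_dist_of_dist_add_le hconn (o := o) (by omega))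
    (le_dist_of_dist_add_le hconn (o := o) (by omega))
  have ht_dist : G.dist o t ≤ G.dist o p₃ := by
    rcases ht with h | h <;> have := h.diff_dist_adj (u := o) <;> omega
  rcases eq_or_eq_or_eq_of_adj_of_horizontalEdge (hdeg p₄) h₃ h₄ hu hpt with rfl | rfl | rfl
  · exact htp rfl
  all_goals omega

lemma exists_upEdge_diamond_of_horizontalEdge {u z : V} (h₁ : UpEdge G o p₁ p₂)
    (h₂ : UpEdge G o p₂ p₃) (h₃ : UpEdge G o p₃ p₄) (h₄ : UpEdge G o p₄ p₅)
    (hu : HorizontalEdge G o p₄ u) (hz : UpEdge G o p₃ z) (hzp : z ≠ p₄) :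
    ∃ y, y ≠ p₃ ∧ UpEdge G o p₂ y ∧ UpEdge G o y z :=
  exists_upEdge_diamond_below hconn hdeg hric h₁ h₂ h₃ hz hzp.symm
    fun _ => eq_of_upEdge_of_horizontalEdge_of_upEdge_left (hdeg p₄) h₃ h₄ hu

lemma not_upEdge_of_horizontalEdge_of_ne {u z : V} (h₁ : UpEdge G o p₁ p₂)
    (h₂ : UpEdge G o p₂ p₃) (h₃ : UpEdge G o p₃ p₄) (h₄ : UpEdge G o p₄ p₅)
    (h₅ : UpEdge G o p₅ p₆) (h₆ : UpEdge G o p₆ p₇) (hu : HorizontalEdge G o p₄ u)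
    (hz : UpEdge G o p₃ z) (hzp : z ≠ p₄) : ¬ UpEdge G o z p₅ := by
  intro hz₅
  obtain ⟨s, hsp, -, hzs⟩ := exists_upEdge_diamond_above hconn hdeg hric h₄ hz₅ h₅ h₆ hzp.symm
    fun _ => eq_of_upEdge_of_horizontalEdge_of_upEdge_right (hdeg p₄) h₃ h₄ hu
  obtain ⟨y, hyp, -, hyz⟩ :=
    exists_upEdge_diamond_of_horizontalEdge hconn hdeg hric h₁ h₂ h₃ h₄ hu hz hzp
  exact hyp (eq_of_upEdge_of_upEdge_of_dist_le (hdeg z) hz₅ hzs hsp.symm hyz.1.symm (by omega)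
    hz.1.symm (by omega))

lemma exists_upEdge_diamond_of_forall_not_upEdge {u : V} (h₃ : UpEdge G o p₃ p₄)
    (h₄ : UpEdge G o p₄ p₅) (h₅ : UpEdge G o p₅ p₆) (h₆ : UpEdge G o p₆ p₇)
    (hu : HorizontalEdge G o p₄ u) (hu_up : ∀ x, ¬ UpEdge G o u x) :
    ∃ t, t ≠ p₄ ∧ UpEdge G o p₃ t ∧ UpEdge G o t p₅ := by
  have three_le_dist : 3 ≤ G.dist u p₆ := by
    by_contra! h
    obtain ⟨x, hx, -⟩ := exists_upEdge_and_upEdge hconn (o := o) (by omega) h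
    exact hu_up x hx
  obtain ⟨t, htp, hpt, ht | ht⟩ := hric.exists_adj_and_adj_or_adj hconn (hdeg p₄) h₄.1 h₅.1
    h₃.1.symm hu.1 (ne_of_apply_ne (G.dist o) (by omega))
    (le_dist_of_dist_add_le hconn (o := o) (by omega)) three_le_dist
  · have := hpt.diff_dist_adj (u := o)
    have := ht.diff_dist_adj (u := o)
    exact ⟨t, htp, ⟨ht, by omega⟩, hpt.symm, by omega⟩
  · have ht_ne : G.dist o t ≠ G.dist o u + 1 := fun h => hu_up t ⟨ht, h⟩
    have := hpt.diff_dist_adj (u := o)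
    have := ht.diff_dist_adj (u := o)
    have htp₅ : UpEdge G o t p₅ := ⟨hpt.symm, by omega⟩
    obtain ⟨s, hsp, -, hts⟩ := exists_upEdge_diamond_above hconn hdeg hric h₄ htp₅ h₅ h₆
      (Ne.symm htp) fun _ => eq_of_upEdge_of_horizontalEdge_of_upEdge_right (hdeg p₄) h₃ h₄ hu
    obtain ⟨q, hq⟩ := exists_upEdge_of_dist_ne_zero (G := G) (o := o) (x := t) (by omega)
    have huq : u = q := eq_of_upEdge_of_upEdge_of_dist_le (hdeg t) htp₅ hts (Ne.symm hsp)
      ht.symm (by omega) hq.1.symm (by omega)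
    subst huq
    omega

lemma exists_upEdge_of_horizontalEdge {u : V} (h₁ : UpEdge G o p₁ p₂)
    (h₂ : UpEdge G o p₂ p₃) (h₃ : UpEdge G o p₃ p₄) (h₄ : UpEdge G o p₄ p₅)
    (h₅ : UpEdge G o p₅ p₆) (h₆ : UpEdge G o p₆ p₇) (hu : HorizontalEdge G o p₄ u) :
    ∃ x, UpEdge G o u x := by
  by_contra! hu_up
  obtain ⟨t, htp, hpt, ht⟩ :=
    exists_upEdge_diamond_of_forall_not_upEdge hconn hdeg hric h₃ h₄ h₅ h₆ hu hu_up
  exact not_upEdge_of_horizontalEdge_of_ne hconn hdeg hric h₁ h₂ h₃ h₄ h₅ h₆ hu hpt htp ht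

lemma exists_upEdge_upEdge_or_horizontalEdge {u : V} (h₁ : UpEdge G o p₁ p₂)
    (h₂ : UpEdge G o p₂ p₃) (h₃ : UpEdge G o p₃ p₄) (h₄ : UpEdge G o p₄ p₅)
    (h₅ : UpEdge G o p₅ p₆) (h₆ : UpEdge G o p₆ p₇) (hu : HorizontalEdge G o p₄ u)
    (hp₃ : ∀ x, ¬ HorizontalEdge G o p₃ x) :
    (∃ w, UpEdge G o p₂ w ∧ UpEdge G o w u) ∨ ∃ t, t ≠ p₄ ∧ HorizontalEdge G o u t := by
  by_cases dist_lt_three : G.dist p₂ u < 3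
  · exact .inl (exists_upEdge_and_upEdge hconn (by omega) dist_lt_three)
  obtain ⟨t, htp, hpt, ht⟩ := hric.exists_adj_and_adj_or_adj hconn (hdeg p₄) h₃.1.symm
    h₂.1.symm h₄.1 hu.1 (ne_of_apply_ne (G.dist o) (by omega))
    (le_dist_of_dist_add_le' hconn (o := o) (by omega)) (by rw [G.dist_comm]; omega)
  have ht_ne : G.dist o t ≠ G.dist o p₃ := fun h => hp₃ t ⟨hpt, h⟩
  have := hpt.diff_dist_adj (u := o)
  rcases ht with ht | ht <;> have := ht.diff_dist_adj (u := o)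
  · exact absurd ⟨ht.symm, by omega⟩ (not_upEdge_of_horizontalEdge_of_ne hconn hdeg hric
      h₁ h₂ h₃ h₄ h₅ h₆ hu ⟨hpt, by omega⟩ htp)
  · exact .inr ⟨t, htp, ht, by omega⟩

lemma not_upEdge_of_horizontalEdge_of_detour {u w x : V} (h₀ : UpEdge G o p₀ p₁)
    (h₁ : UpEdge G o p₁ p₂) (h₂ : UpEdge G o p₂ p₃) (h₃ : UpEdge G o p₃ p₄)
    (h₄ : UpEdge G o p₄ p₅) (hu : HorizontalEdge G o p₄ u) (hw : UpEdge G o p₂ w)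
    (hwp : w ≠ p₃) (hwu : UpEdge G o w u) : ¬ UpEdge G o u x := by
  intro hux
  have hp₃_low : ∀ y, UpEdge G o y p₃ → y = p₂ := fun _ =>
    eq_of_upEdge_pred_of_horizontalEdge hconn hdeg hric h₂ h₃ h₄ hu
  obtain ⟨y, hyp, -, hyw⟩ :=
    exists_upEdge_diamond_below hconn hdeg hric h₀ h₁ h₂ hw hwp.symm hp₃_low
  have three_le_dist : 3 ≤ G.dist p₄ y := by
    by_contra! h
    obtain ⟨m, hym, hm⟩ :=
      exists_upEdge_and_upEdge hconn (o := o) (by omega) (G.dist_comm (u := p₄) ▸ h)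
    obtain rfl := eq_of_upEdge_of_horizontalEdge_of_upEdge_left (hdeg p₄) h₃ h₄ hu hm
    exact hyp (hp₃_low y hym)
  obtain ⟨t, htu, hwt, ht⟩ := hric.exists_adj_and_adj_or_adj hconn (hdeg u) hwu.1.symm
    hyw.1.symm hu.1.symm hux.1 (ne_of_apply_ne (G.dist o) (by omega)) three_le_dist
    (le_dist_of_dist_add_le' hconn (o := o) (by omega))
  have ht_le : G.dist o w ≤ G.dist o t := by
    rcases ht with h | h <;> have := h.diff_dist_adj (u := o) <;> omega
  exact htu (eq_of_upEdge_of_upEdge_of_le_dist (hdeg w) hyw hw hyp hwt ht_le hwu.1 (by omega))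

theorem exists_horizontalEdge_of_horizontalEdge {u : V} (h₀ : UpEdge G o p₀ p₁)
    (h₁ : UpEdge G o p₁ p₂) (h₂ : UpEdge G o p₂ p₃) (h₃ : UpEdge G o p₃ p₄)
    (h₄ : UpEdge G o p₄ p₅) (h₅ : UpEdge G o p₅ p₆) (h₆ : UpEdge G o p₆ p₇)
    (hu : HorizontalEdge G o p₄ u) : ∃ x, HorizontalEdge G o p₃ x := by
  by_contra! hp₃
  obtain ⟨x, hux⟩ := exists_upEdge_of_horizontalEdge hconn hdeg hric h₁ h₂ h₃ h₄ h₅ h₆ hu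
  have hup : HorizontalEdge G o u p₄ := ⟨hu.1.symm, hu.2.symm⟩
  rcases exists_upEdge_upEdge_or_horizontalEdge hconn hdeg hric h₁ h₂ h₃ h₄ h₅ h₆ hu hp₃ with
    ⟨w, hpw, hwu⟩ | ⟨t, htp, hut⟩
  · by_cases hwp : w = p₃
    · subst hwp
      obtain ⟨y, hyw, -, hyu⟩ := exists_upEdge_diamond_of_horizontalEdge hconn hdeg hric
        h₁ h₂ h₃ h₄ hu hwu hu.1.ne'
      have hpx : p₄ = x := eq_of_upEdge_of_upEdge_of_le_dist (hdeg u) hyu hwu hyw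
        hup.1 (by omega) hux.1 (by omega)
      subst hpx
      omega
    · exact not_upEdge_of_horizontalEdge_of_detour hconn hdeg hric h₀ h₁ h₂ h₃ h₄ hu hpw hwp hwu hux
  · obtain ⟨q, hqu⟩ := exists_upEdge_of_dist_ne_zero (G := G) (o := o) (x := u) (by omega)
    rcases eq_or_eq_or_eq_of_adj_of_horizontalEdge (hdeg u) hqu hux hup hut.1 with
      rfl | rfl | rfl
    · omega
    · omega
    · exact htp rfl

end Propagation

section GeodesicPath

variable {G : SimpleGraph V} {v : ℕ → V} {l : ℕ}

/-- The vertices `v 0, …, v l` form a geodesic path of length `l`; distinctness follows from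
`dist_eq`, and the values of `v` beyond `l` are junk. -/
structure IsGeodesicPath (G : SimpleGraph V) (v : ℕ → V) (l : ℕ) : Prop where
  adj : ∀ i < l, G.Adj (v i) (v (i + 1))
  dist_eq : G.dist (v 0) (v l) = l

/-- The indices `i` of the interior vertices `v i` having a neighbor off the path on the
same level of the distance from `v 0`: the set `K` of the theorem. -/
def horizontalIndices (G : SimpleGraph V) (v : ℕ → V) (l : ℕ) : Set ℕ :=
  {i | 1 ≤ i ∧ i ≤ l - 1 ∧
    ∃ u, G.Adj (v i) u ∧ u ≠ v (i - 1) ∧ u ≠ v (i + 1) ∧ G.dist (v 0) u = i}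

namespace IsGeodesicPath

lemma dist_add_le (hv : IsGeodesicPath G v l) {i k : ℕ} (hik : i + k ≤ l) :
    G.dist (v 0) (v (i + k)) ≤ G.dist (v 0) (v i) + k := by
  induction k with
  | zero => rfl
  | succ k ih =>
    have := (hv.adj (i + k) hik).diff_dist_adj (u := v 0)
    have := ih (by omega)
    rw [← Nat.add_assoc]
    omega

lemma dist_zero (hv : IsGeodesicPath G v l) {i : ℕ} (hi : i ≤ l) :
    G.dist (v 0) (v i) = i := by
  have hle := hv.dist_add_le (i := 0) (k := i) (by omega)
  have hge := hv.dist_add_le (i := i) (k := l - i) (by omega)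
  rw [Nat.zero_add, dist_self] at hle
  rw [Nat.add_sub_cancel' hi, hv.dist_eq] at hge
  omega

lemma upEdge (hv : IsGeodesicPath G v l) {i : ℕ} (hi : i < l) :
    UpEdge G (v 0) (v i) (v (i + 1)) :=
  ⟨hv.adj i hi, by rw [hv.dist_zero hi, hv.dist_zero hi.le]⟩

lemma mem_horizontalIndices_iff (hv : IsGeodesicPath G v l) {i : ℕ} (hi : 1 ≤ i)
    (hil : i < l) :
    i ∈ horizontalIndices G v l ↔ ∃ u, HorizontalEdge G (v 0) (v i) u := by
  have hdist := hv.dist_zero hil.le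
  constructor
  · rintro ⟨-, -, u, hadj, -, -, hu⟩
    exact ⟨u, hadj, hu.trans hdist.symm⟩
  · rintro ⟨u, hadj, hu⟩
    have hpred := hv.dist_zero (i := i - 1) (by omega)
    have hsucc := hv.dist_zero (i := i + 1) hil
    exact ⟨hi, by omega, u, hadj, ne_of_apply_ne (G.dist (v 0)) (by omega),
      ne_of_apply_ne (G.dist (v 0)) (by omega), hu.trans hdist⟩

lemma mem_horizontalIndices_of_add_one_mem [G.LocallyFinite] (hconn : G.Connected)
    (hdeg : ∀ x, G.degree x ≤ 3) (hric : NonnegRicci G) (hv : IsGeodesicPath G v l) {i : ℕ}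
    (hi : 3 ≤ i) (hil : i + 4 ≤ l) (hmem : i + 1 ∈ horizontalIndices G v l) :
    i ∈ horizontalIndices G v l := by
  obtain ⟨j, rfl⟩ := Nat.exists_eq_add_of_le' hi
  obtain ⟨u, hu⟩ := (hv.mem_horizontalIndices_iff (by omega) (by omega)).1 hmem
  exact (hv.mem_horizontalIndices_iff (by omega) (by omega)).2 <|
    exists_horizontalEdge_of_horizontalEdge hconn hdeg hric (hv.upEdge (i := j) (by omega))
      (hv.upEdge (by omega)) (hv.upEdge (by omega)) (hv.upEdge (by omega))
      (hv.upEdge (by omega)) (hv.upEdge (by omega)) (hv.upEdge (by omega)) hu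

end IsGeodesicPath

end GeodesicPath

theorem min_horizontal_index_general (G : SimpleGraph V) [G.LocallyFinite]
    (hconn : G.Connected) (hdeg : ∀ x : V, G.degree x ≤ 3) (hric : NonnegRicci G)
    {v : ℕ → V} {l : ℕ} (hv : IsGeodesicPath G v l)
    (hne : (horizontalIndices G v l).Nonempty) :
    sInf (horizontalIndices G v l) ≤ 3 ∨ l - 2 ≤ sInf (horizontalIndices G v l) := by
  by_contra! ⟨hgt, hlt⟩
  obtain ⟨i, hi⟩ := Nat.exists_eq_add_one_of_ne_zero (Nat.ne_zero_of_lt hgt)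
  have hmem : i + 1 ∈ horizontalIndices G v l := hi ▸ Nat.sInf_mem hne
  have hpred : i ∈ horizontalIndices G v l :=
    hv.mem_horizontalIndices_of_add_one_mem hconn hdeg hric (by omega) (by omega) hmem
  have := Nat.sInf_le hpred
  omega

/-- Let `P = v 0, …, v l` (`l ≥ 6`) be a diameter path of a finite,
connected simple graph `G` with maximum degree at most 3 and nonnegative Ricci curvature,
and let `K` be the set of indices `1 ≤ i ≤ l − 1` such that `v i` has a third neighbor at
distance `i` from `v 0`. If `K` is nonempty then `min K ≤ 3` or `min K ≥ l − 2`. -/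
theorem min_horizontal_index (G : SimpleGraph V) [Fintype V] [G.LocallyFinite]
    (hconn : G.Connected) (hdeg : ∀ x : V, G.degree x ≤ 3) (hric : NonnegRicci G)
    (l : ℕ) (hl : 6 ≤ l) (v : ℕ → V)
    (hadj : ∀ i < l, G.Adj (v i) (v (i + 1)))
    (hinj : ∀ i ≤ l, ∀ j ≤ l, v i = v j → i = j)
    (hgeo : G.dist (v 0) (v l) = l)
    (hdiam : ∀ x y : V, G.dist x y ≤ l)
    (K : Set ℕ)
    (hK : K = { i : ℕ | 1 ≤ i ∧ i ≤ l - 1 ∧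
      ∃ u : V, G.Adj (v i) u ∧ u ≠ v (i - 1) ∧ u ≠ v (i + 1) ∧ G.dist (v 0) u = i })
    (hne : K.Nonempty) :
    sInf K ≤ 3 ∨ l - 2 ≤ sInf K := by
  subst hK
  exact min_horizontal_index_general G hconn hdeg hric ⟨hadj, hgeo⟩ hne
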